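/- Let 0 < θ < 1, let p₀, p₁ be globally log-Hölder continuous exponents with 1 ≤ p₀⁻ ≤ p₀⁺ < ∞ and 1 ≤ p₁⁻ ≤ p₁⁺ < ∞, and let α₀, α₁ : ℝ^n → ℝ be locally log-Hölder continuous. Define 1/p(·) := (1−θ)/p₀(·) + θ/p₁(·) and α(·) := (1−θ)α₀(·) + θα₁(·). Then there exists a constant C > 0 such that for every complex sequence λ with 0 < ‖λ‖_{f^{α(·)}_{p(·),p(·)}} < ∞ there exist nonnegative sequences λ⁰, λ¹ indexed by ℕ₀ × ℤ^n with |λ_{j,m}| ≤ ‖λ‖_{f^{α(·)}_{p(·),p(·)}} (λ⁰_{j,m})^{1−θ} (λ¹_{j,m})^{θ} for all j ∈ ℕ₀ and m ∈ ℤ^n, and ‖λ⁰‖_{f^{α₀(·)}_{p₀(·),p₀(·)}} ≤ C and ‖λ¹‖_{f^{α₁(·)}_{p₁(·),p₁(·)}} ≤ C. -/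

import Mathlib

open MeasureTheory ENNReal Real Set

noncomputable section

/-- Euclidean space ℝ^n. -/
abbrev En (n : ℕ) := EuclideanSpace ℝ (Fin n)

/-- `g` is locally log-Hölder continuous with constant `c`. -/
def LocLogHolder {n : ℕ} (c : ℝ) (g : En n → ℝ) : Prop :=
  0 < c ∧ ∀ x y : En n, |g x - g y| ≤ c / Real.log (Real.exp 1 + 1 / ‖x - y‖)

/-- `g` is globally log-Hölder continuous with local constant `c`. -/
def GlobLogHolder {n : ℕ} (c : ℝ) (g : En n → ℝ) : Prop :=
  LocLogHolder c g ∧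
    ∃ (gi cd : ℝ), 0 < cd ∧ ∀ x : En n, |g x - gi| ≤ cd / Real.log (Real.exp 1 + ‖x‖)

/-- The kernel η_{v,h}(x) = 2^{nv} (1 + 2^v |x|)^{-h}. -/
def eta (n : ℕ) (v : ℕ) (h : ℝ) (x : En n) : ℝ :=
  (2 : ℝ) ^ (n * v) * (1 + (2 : ℝ) ^ v * ‖x‖) ^ (-h)

/-- The dyadic cube Q_{v,m}. -/
def dyadicCube (n : ℕ) (v : ℤ) (m : Fin n → ℤ) : Set (En n) :=
  {x | ∀ i, (m i : ℝ) ≤ (2 : ℝ) ^ v * x i ∧ (2 : ℝ) ^ v * x i < m i + 1}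

/-- Luxemburg (quasi-)norm of an ℝ≥0∞-valued function with variable exponent `p`. -/
def luxNorm {n : ℕ} (p : En n → ℝ) (F : En n → ℝ≥0∞) : ℝ≥0∞ :=
  sInf {c : ℝ≥0∞ | 0 < c ∧ ∫⁻ x, (F x / c) ^ p x ≤ 1}

/-- The mixed Lebesgue-sequence space norm ‖(F_v)_v‖_{L^{p(·)}(ℓ_{q(·)})}. -/
def mixedNorm {n : ℕ} (p q : En n → ℝ) (F : ℕ → En n → ℝ≥0∞) : ℝ≥0∞ :=
  luxNorm p fun x => (∑' v : ℕ, F v x ^ q x) ^ (1 / q x)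

/-- The sequence space norm ‖λ‖_{f^{α(·)}_{p(·),q(·)}}. -/
def seqNorm {n : ℕ} (α p q : En n → ℝ) (lam : ℕ → (Fin n → ℤ) → ℂ) : ℝ≥0∞ :=
  mixedNorm p q fun v x =>
    ∑' m : Fin n → ℤ,
      ENNReal.ofReal ((2 : ℝ) ^ ((v : ℝ) * (α x + n / 2)) * ‖lam v m‖) *
        (dyadicCube n (v : ℤ) m).indicator (fun _ => (1 : ℝ≥0∞)) x

/-- The sequence space norm ‖λ‖_{f^{α(·)}_{∞,q}}. -/
def seqNormInf {n : ℕ} (α : En n → ℝ) (q : ℝ) (lam : ℕ → (Fin n → ℤ) → ℂ) : ℝ≥0∞ :=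
  ⨆ (vQ : ℤ) (mQ : Fin n → ℤ),
    volume (dyadicCube n vQ mQ) ^ (-(1 / q)) *
      (∑' v : ℕ, if vQ ≤ (v : ℤ) then
          ∫⁻ x in dyadicCube n vQ mQ,
            ∑' m : Fin n → ℤ,
              ENNReal.ofReal ((2 : ℝ) ^ ((v : ℝ) * (α x + n / 2) * q) * ‖lam v m‖ ^ q) *
                (dyadicCube n (v : ℤ) m).indicator (fun _ => (1 : ℝ≥0∞)) x
        else 0) ^ (1 / q)

/-- The Calderón product (quasi-)norm associated to two sequence space norms. -/
def calderonNorm {n : ℕ} (N0 N1 : (ℕ → (Fin n → ℤ) → ℂ) → ℝ≥0∞) (θ : ℝ)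
    (lam : ℕ → (Fin n → ℤ) → ℂ) : ℝ≥0∞ :=
  sInf {M : ℝ≥0∞ | ∃ μ ν : ℕ → (Fin n → ℤ) → ℂ, N0 μ ≤ 1 ∧ N1 ν ≤ 1 ∧
    ∀ v m, ENNReal.ofReal ‖lam v m‖ ≤
      M * ENNReal.ofReal ‖μ v m‖ ^ (1 - θ) * ENNReal.ofReal ‖ν v m‖ ^ θ}

/-!
The endpoint factors are powers of the coefficients of `λ`. Normalize `λ` and put, on the cube
`Q_{v,m}` with lower corner `y`, `t = 2^{v(α(y)+n/2)} |λ_{v,m}|`. With `r₀ = p / p₀` and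
`r₁ = p / p₁` one has `(1-θ) r₀ + θ r₁ = 1`, so the sequences `λ⁰ = t^{r₀(y)} 2^{-v(α₀(y)+n/2)}` and
`λ¹ = t^{r₁(y)} 2^{-v(α₁(y)+n/2)}` satisfy `(λ⁰)^{1-θ} (λ¹)^θ = |λ_{v,m}|`, and
`(2^{v(α₀+n/2)} λ⁰)^{p₀}` should be comparable to `t^p`, whose integral is controlled.

The exponents being frozen at `y`, this comparison requires `t^{r₀(x)}` and `t^{r₀(y)}` to be
comparable on the cube, that is `|log t| |r₀(x) - r₀(y)| = O(1)`. By log-Hölder continuity this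
holds if `t` lies between two powers of the scale `2^v (e + |y|)`. Chebyshev's inequality gives the
upper bound, since the modular of a single cube is bounded. For the lower bound `t` is replaced by
`max t ε`, where `ε` is a negative power of the scale, so small that the family of all `ε` still has
a finite modular.
-/

section Factorization

variable {n : ℕ}

/-- The index `m` of the dyadic cube `Q_{v,m}` of level `v` that contains `x`. -/
def dyadicIndex (v : ℕ) (x : En n) : Fin n → ℤ := fun i => ⌊(2 : ℝ) ^ v * x i⌋

/-- The lower corner `2^{-v} m` of `Q_{v,m}`, the point at which exponents are frozen. -/
def dyadicCorner (v : ℕ) (m : Fin n → ℤ) : En n := WithLp.toLp 2 fun i => (m i : ℝ) / 2 ^ v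

theorem mem_dyadicCube_iff {v : ℕ} {m : Fin n → ℤ} {x : En n} :
    x ∈ dyadicCube n v m ↔ dyadicIndex v x = m := by
  simp only [dyadicCube, dyadicIndex, Set.mem_ofPred_eq, zpow_natCast, funext_iff,
    Int.floor_eq_iff]

theorem mem_dyadicCube_dyadicIndex (v : ℕ) (x : En n) :
    x ∈ dyadicCube n v (dyadicIndex v x) :=
  mem_dyadicCube_iff.2 rfl

theorem tsum_mul_indicator_dyadicCube (v : ℕ) (f : (Fin n → ℤ) → ℝ≥0∞) (x : En n) :
    ∑' m, f m * (dyadicCube n v m).indicator (fun _ => (1 : ℝ≥0∞)) x = f (dyadicIndex v x) := by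
  rw [tsum_eq_single (dyadicIndex v x) fun m hm => ?_,
    Set.indicator_of_mem (mem_dyadicCube_dyadicIndex v x), mul_one]
  rw [Set.indicator_of_notMem fun hx => hm (mem_dyadicCube_iff.1 hx).symm, mul_zero]

theorem norm_le_sum_abs_apply (x : En n) : ‖x‖ ≤ ∑ i, |x i| := by
  conv_lhs => rw [← (EuclideanSpace.basisFun (Fin n) ℝ).sum_repr x]
  refine (norm_sum_le _ _).trans_eq (Finset.sum_congr rfl fun i _ => ?_)
  simp [norm_smul]

theorem norm_sub_dyadicCorner_le {v : ℕ} {m : Fin n → ℤ} {x : En n}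
    (hx : x ∈ dyadicCube n v m) : ‖x - dyadicCorner v m‖ ≤ n / 2 ^ v := by
  have h2 : (0 : ℝ) < 2 ^ v := by positivity
  have hcoord (i : Fin n) : |(x - dyadicCorner v m) i| ≤ 1 / 2 ^ v := by
    obtain ⟨hlo, hhi⟩ := hx i
    rw [zpow_natCast] at hlo hhi
    have heq : (x - dyadicCorner v m) i = (2 ^ v * x i - m i) / 2 ^ v := by
      simp only [dyadicCorner, PiLp.sub_apply]
      field_simp
    rw [heq, abs_of_nonneg (div_nonneg (by linarith) h2.le)]
    gcongr
    linarith
  calc ‖x - dyadicCorner v m‖ ≤ ∑ i, |(x - dyadicCorner v m) i| := norm_le_sum_abs_apply _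
    _ ≤ ∑ _i : Fin n, (1 / 2 ^ v : ℝ) := Finset.sum_le_sum fun i _ => hcoord i
    _ = n / 2 ^ v := by simp [div_eq_mul_inv]

theorem norm_sub_dyadicCorner_le_natCast {v : ℕ} {m : Fin n → ℤ} {x : En n}
    (hx : x ∈ dyadicCube n v m) : ‖x - dyadicCorner v m‖ ≤ n :=
  (norm_sub_dyadicCorner_le hx).trans
    (div_le_self n.cast_nonneg (one_le_pow₀ one_le_two))

theorem dyadicCube_eq_preimage_pi_Ico (v : ℕ) (m : Fin n → ℤ) :
    dyadicCube n v m = (MeasurableEquiv.toLp 2 (Fin n → ℝ)).symm ⁻¹'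
      Set.univ.pi fun i => Set.Ico ((m i : ℝ) / 2 ^ v) ((m i + 1 : ℝ) / 2 ^ v) := by
  have h2 : (0 : ℝ) < 2 ^ v := by positivity
  ext x
  simp only [dyadicCube, Set.mem_ofPred_eq, zpow_natCast, Set.mem_preimage, Set.mem_pi,
    Set.mem_univ, true_implies, Set.mem_Ico, div_le_iff₀ h2, lt_div_iff₀ h2, mul_comm ((2 : ℝ) ^ v)]
  rfl

theorem measurableSet_pi_Ico (a b : Fin n → ℝ) :
    MeasurableSet (Set.univ.pi fun i => Set.Ico (a i) (b i)) :=
  MeasurableSet.univ_pi fun _ => measurableSet_Ico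

theorem measurableSet_dyadicCube (v : ℕ) (m : Fin n → ℤ) :
    MeasurableSet (dyadicCube n v m) := by
  rw [dyadicCube_eq_preimage_pi_Ico]
  exact (MeasurableEquiv.measurable _) (measurableSet_pi_Ico _ _)

theorem volume_dyadicCube (v : ℕ) (m : Fin n → ℤ) :
    volume (dyadicCube n v m) = ENNReal.ofReal (((2 : ℝ) ^ v)⁻¹ ^ n) := by
  have hside (i : Fin n) : (m i + 1 : ℝ) / 2 ^ v - m i / 2 ^ v = (2 ^ v)⁻¹ := by ring
  rw [dyadicCube_eq_preimage_pi_Ico,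
    (EuclideanSpace.volume_preserving_symm_measurableEquiv_toLp (Fin n)).measure_preimage
      (measurableSet_pi_Ico _ _).nullMeasurableSet, Real.volume_pi_Ico]
  simp only [hside, Finset.prod_const, Finset.card_univ, Fintype.card_fin]
  rw [ENNReal.ofReal_pow (by positivity)]

/-! ### Log-Hölder continuity on dyadic cubes -/

/-- The oscillation of `g` between a point of `Q_{v,m}` and the corner of the cube is
`O(1 / log W_{v,m})`. For `W_{v,m} = 2^v` this is local log-Hölder continuity as seen by the cubes,
for `W = cubeScale` it also contains the decay condition. -/
def BddCubeOsc (W : ℕ → (Fin n → ℤ) → ℝ) (g : En n → ℝ) : Prop :=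
  ∃ B, ∀ (v : ℕ) m, ∀ x ∈ dyadicCube n v m, Real.log (W v m) * |g x - g (dyadicCorner v m)| ≤ B

/-- The scale `2^v (e + |2^{-v} m|)` of `Q_{v,m}`, at which globally log-Hölder continuous functions
are almost constant. -/
def cubeScale (v : ℕ) (m : Fin n → ℤ) : ℝ := 2 ^ v * (Real.exp 1 + ‖dyadicCorner v m‖)

theorem two_pow_le_cubeScale (v : ℕ) (m : Fin n → ℤ) : (2 : ℝ) ^ v ≤ cubeScale v m := by
  have := Real.add_one_le_exp 1
  exact le_mul_of_one_le_right (by positivity)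
    (by linarith [norm_nonneg (dyadicCorner v m)])

theorem exp_one_le_cubeScale (v : ℕ) (m : Fin n → ℤ) : Real.exp 1 ≤ cubeScale v m :=
  (le_add_of_nonneg_right (norm_nonneg _)).trans
    (le_mul_of_one_le_left (by positivity) (one_le_pow₀ one_le_two))

theorem one_le_cubeScale (v : ℕ) (m : Fin n → ℤ) : 1 ≤ cubeScale v m :=
  (Real.one_le_exp zero_le_one).trans (exp_one_le_cubeScale v m)

theorem log_mul_le_of_le_div_log {u c E R W : ℝ} (hu : 0 ≤ u) (hE : Real.exp 1 ≤ E) (hR : 1 ≤ R)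
    (hW : 0 < W) (hWE : W ≤ R * E) (h : u ≤ c / Real.log E) :
    Real.log W * u ≤ (1 + Real.log R) * c := by
  have hE0 : 0 < E := (Real.exp_pos 1).trans_le hE
  have hlogE : 1 ≤ Real.log E := (Real.le_log_iff_exp_le hE0).2 hE
  have hlogR : 0 ≤ Real.log R := Real.log_nonneg hR
  have hlogW : Real.log W ≤ (1 + Real.log R) * Real.log E := by
    calc Real.log W ≤ Real.log (R * E) := Real.log_le_log hW hWE
      _ = Real.log R + Real.log E := Real.log_mul (by positivity) (by positivity)
      _ ≤ (1 + Real.log R) * Real.log E := by nlinarith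
  calc Real.log W * u ≤ (1 + Real.log R) * Real.log E * u := by gcongr
    _ = (1 + Real.log R) * (u * Real.log E) := by ring
    _ ≤ (1 + Real.log R) * c := by
      gcongr
      exact (le_div_iff₀ (zero_lt_one.trans_le hlogE)).1 h

theorem LocLogHolder.bddCubeOsc {c : ℝ} {g : En n → ℝ} (hg : LocLogHolder c g) :
    BddCubeOsc (fun v _ => 2 ^ v) g := by
  refine ⟨(1 + Real.log (1 + n)) * c, fun v m x hx => ?_⟩
  have hc := hg.1
  have hlog : 0 ≤ Real.log (1 + n : ℝ) := Real.log_nonneg (by simp)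
  have hdist := norm_sub_dyadicCorner_le hx
  set y := dyadicCorner v m
  rcases eq_or_ne x y with hxy | hxy
  · rw [hxy, sub_self, abs_zero, mul_zero]
    positivity
  have hpos : 0 < ‖x - y‖ := norm_pos_iff.2 (sub_ne_zero.2 hxy)
  have hle : (2 : ℝ) ^ v ≤ n * (1 / ‖x - y‖) := by
    rwa [mul_one_div, le_div_comm₀ (by positivity) hpos]
  refine log_mul_le_of_le_div_log (abs_nonneg _) (le_add_of_nonneg_right (by positivity))
    (by simp) (by positivity) (hle.trans ?_) (hg.2 x y)
  gcongr
  · exact le_add_of_nonneg_left zero_le_one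
  · exact le_add_of_nonneg_left (Real.exp_pos 1).le

theorem GlobLogHolder.bddCubeOsc {c : ℝ} {g : En n → ℝ} (hg : GlobLogHolder c g) :
    BddCubeOsc cubeScale g := by
  obtain ⟨hloc, gInf, d, -, hdecay⟩ := hg
  obtain ⟨B, hB⟩ := hloc.bddCubeOsc
  refine ⟨B + ((1 + Real.log (1 + n)) * d + (1 + Real.log 1) * d), fun v m x hx => ?_⟩
  have hdist := norm_sub_dyadicCorner_le_natCast hx
  have hBx := hB v m x hx
  rw [cubeScale, Real.log_mul (by positivity) (by positivity), add_mul]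
  set y := dyadicCorner v m
  have hE (z : En n) : Real.exp 1 ≤ Real.exp 1 + ‖z‖ := le_add_of_nonneg_right (norm_nonneg z)
  have hyx : Real.exp 1 + ‖y‖ ≤ (1 + n) * (Real.exp 1 + ‖x‖) := by
    have : ‖y‖ ≤ ‖x‖ + ‖x - y‖ := by simpa using norm_sub_le x (x - y)
    nlinarith [Real.add_one_le_exp 1, norm_nonneg x, n.cast_nonneg (α := ℝ)]
  have hlogx : Real.log (Real.exp 1 + ‖y‖) * |g x - gInf| ≤ (1 + Real.log (1 + n)) * d :=
    log_mul_le_of_le_div_log (abs_nonneg _) (hE x) (by simp) (by positivity) hyx (hdecay x)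
  have hlogy : Real.log (Real.exp 1 + ‖y‖) * |g y - gInf| ≤ (1 + Real.log 1) * d :=
    log_mul_le_of_le_div_log (abs_nonneg _) (hE y) le_rfl (by positivity) (one_mul _).ge (hdecay y)
  have hlog : 0 ≤ Real.log (Real.exp 1 + ‖y‖) :=
    Real.log_nonneg ((Real.one_le_exp zero_le_one).trans (hE y))
  refine add_le_add hBx ?_
  calc Real.log (Real.exp 1 + ‖y‖) * |g x - g y|
      ≤ Real.log (Real.exp 1 + ‖y‖) * (|g x - gInf| + |g y - gInf|) := by
        gcongr
        simpa using abs_sub (g x - gInf) (g y - gInf)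
    _ ≤ (1 + Real.log (1 + n)) * d + (1 + Real.log 1) * d := by
        rw [mul_add]
        exact add_le_add hlogx hlogy

theorem GlobLogHolder.exists_forall_le {c : ℝ} {g : En n → ℝ} (hg : GlobLogHolder c g) :
    ∃ b, ∀ x, g x ≤ b := by
  obtain ⟨-, gInf, d, hd, hdecay⟩ := hg
  refine ⟨gInf + d, fun x => ?_⟩
  have hlog : 1 ≤ Real.log (Real.exp 1 + ‖x‖) :=
    (Real.le_log_iff_exp_le (by positivity)).2 (le_add_of_nonneg_right (norm_nonneg x))
  linarith [le_abs_self (g x - gInf), hdecay x, div_le_self hd.le hlog]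

namespace BddCubeOsc

variable {W : ℕ → (Fin n → ℤ) → ℝ} {f g : En n → ℝ}

theorem of_abs_sub_le {h : En n → ℝ} {a b : ℝ} (hW : ∀ v m, 1 ≤ W v m) (hf : BddCubeOsc W f)
    (hg : BddCubeOsc W g) (ha : 0 ≤ a) (hb : 0 ≤ b)
    (hh : ∀ x y, |h x - h y| ≤ a * |f x - f y| + b * |g x - g y|) : BddCubeOsc W h := by
  obtain ⟨A, hA⟩ := hf
  obtain ⟨B, hB⟩ := hg
  refine ⟨a * A + b * B, fun v m x hx => ?_⟩
  set y := dyadicCorner v m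
  calc Real.log (W v m) * |h x - h y|
      ≤ Real.log (W v m) * (a * |f x - f y| + b * |g x - g y|) :=
        mul_le_mul_of_nonneg_left (hh x y) (Real.log_nonneg (hW v m))
    _ = a * (Real.log (W v m) * |f x - f y|) + b * (Real.log (W v m) * |g x - g y|) := by ring
    _ ≤ a * A + b * B := by
        gcongr
        exacts [hA v m x hx, hB v m x hx]

theorem const_mul_add_const_mul (hW : ∀ v m, 1 ≤ W v m) (hf : BddCubeOsc W f)
    (hg : BddCubeOsc W g) (a b : ℝ) : BddCubeOsc W fun x => a * f x + b * g x := by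
  refine of_abs_sub_le hW hf hg (abs_nonneg a) (abs_nonneg b) fun x y => ?_
  calc |a * f x + b * g x - (a * f y + b * g y)|
      = |a * (f x - f y) + b * (g x - g y)| := by ring_nf
    _ ≤ |a| * |f x - f y| + |b| * |g x - g y| := by
        rw [← abs_mul, ← abs_mul]
        exact abs_add_le _ _

theorem div {a b : ℝ} (hW : ∀ v m, 1 ≤ W v m) (hf : BddCubeOsc W f) (hg : BddCubeOsc W g)
    (ha : 0 < a) (hfb : ∀ x, |f x| ≤ b) (hga : ∀ x, a ≤ g x) :
    BddCubeOsc W fun x => f x / g x := by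
  have hb (x : En n) : 0 ≤ b := (abs_nonneg _).trans (hfb x)
  refine of_abs_sub_le hW hf hg (inv_nonneg.2 ha.le)
    (div_nonneg (hb 0) (by positivity : 0 ≤ a * a)) fun x y => ?_
  have hgx : 0 < g x := ha.trans_le (hga x)
  have hgy : 0 < g y := ha.trans_le (hga y)
  calc |f x / g x - f y / g y|
      = |(f x - f y) / g x - f y * (g x - g y) / (g x * g y)| := by
        congr 1
        field_simp
        ring
    _ ≤ |f x - f y| / g x + |f y| * |g x - g y| / (g x * g y) := by
        refine (abs_sub _ _).trans_eq ?_
        rw [abs_div, abs_div, abs_mul, abs_mul, abs_of_pos hgx, abs_of_pos hgy]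
    _ ≤ |f x - f y| / a + b * |g x - g y| / (a * a) := by
        have := hb x
        gcongr
        exacts [hga x, hfb y, hga x, hga y]
    _ = a⁻¹ * |f x - f y| + b / (a * a) * |g x - g y| := by ring

end BddCubeOsc

theorem rpow_le_exp_mul_rpow {s u w M : ℝ} (hs : 0 < s) (h : |Real.log s| * |u - w| ≤ M) :
    s ^ u ≤ Real.exp M * s ^ w := by
  have hexp : s ^ (u - w) ≤ Real.exp M := by
    rw [Real.rpow_def_of_pos hs, Real.exp_le_exp]
    exact (le_abs_self _).trans ((abs_mul _ _).trans_le h)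
  calc s ^ u = s ^ (u - w) * s ^ w := by rw [← Real.rpow_add hs, sub_add_cancel]
    _ ≤ Real.exp M * s ^ w := by gcongr

theorem BddCubeOsc.exists_rpow_le {W : ℕ → (Fin n → ℤ) → ℝ} {g : En n → ℝ} {N : ℝ}
    (hg : BddCubeOsc W g) (hN : 0 ≤ N) :
    ∃ K, 1 ≤ K ∧ ∀ (v : ℕ) m, ∀ x ∈ dyadicCube n v m, ∀ s > 0,
      |Real.log s| ≤ N * Real.log (W v m) →
        s ^ g x ≤ K * s ^ g (dyadicCorner v m) ∧ s ^ g (dyadicCorner v m) ≤ K * s ^ g x := by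
  obtain ⟨B, hB⟩ := hg
  refine ⟨Real.exp |N * B|, Real.one_le_exp (abs_nonneg _), fun v m x hx s hs hlog => ?_⟩
  have hM : |Real.log s| * |g x - g (dyadicCorner v m)| ≤ |N * B| :=
    calc |Real.log s| * |g x - g (dyadicCorner v m)|
        ≤ N * Real.log (W v m) * |g x - g (dyadicCorner v m)| := by gcongr
      _ = N * (Real.log (W v m) * |g x - g (dyadicCorner v m)|) := mul_assoc _ _ _
      _ ≤ N * B := by
          gcongr
          exact hB v m x hx
      _ ≤ |N * B| := le_abs_self _
  exact ⟨rpow_le_exp_mul_rpow hs hM, rpow_le_exp_mul_rpow hs (by rwa [abs_sub_comm] at hM)⟩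

/-! ### Luxemburg norms and modulars -/

theorem luxNorm_le_of_lintegral_rpow_le {p : En n → ℝ} {F : En n → ℝ≥0∞} {a : ℝ} {K : ℝ≥0∞}
    (ha : 0 < a) (hp : ∀ x, a ≤ p x) (hK : 1 ≤ K) (hF : ∫⁻ x, F x ^ p x ≤ K) :
    luxNorm p F ≤ K ^ (1 / a) := by
  refine sInf_le ⟨ENNReal.rpow_pos_of_nonneg (zero_lt_one.trans_le hK) (by positivity), ?_⟩
  have hpow (x : En n) : K ≤ (K ^ (1 / a)) ^ p x := by
    rw [← ENNReal.rpow_mul]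
    refine (ENNReal.rpow_one K).symm.trans_le (ENNReal.rpow_le_rpow_of_exponent_le hK ?_)
    rw [one_div_mul_eq_div]
    exact (one_le_div₀ ha).2 (hp x)
  calc ∫⁻ x, (F x / K ^ (1 / a)) ^ p x ≤ ∫⁻ x, K⁻¹ * F x ^ p x := by
        refine lintegral_mono fun x => ?_
        rw [ENNReal.div_rpow_of_nonneg _ _ (ha.le.trans (hp x)), ENNReal.div_eq_inv_mul]
        gcongr
        exact hpow x
    _ = K⁻¹ * ∫⁻ x, F x ^ p x :=
        lintegral_const_mul' _ _ (ENNReal.inv_ne_top.2 (zero_lt_one.trans_le hK).ne')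
    _ ≤ K⁻¹ * K := by gcongr
    _ ≤ 1 := ENNReal.inv_mul_le_one K

/- The constant `2 ^ b` pays for not asking that the infimum defining the norm be attained, which
would need measurability. -/
theorem lintegral_div_luxNorm_rpow_le {p : En n → ℝ} {F : En n → ℝ≥0∞} {b : ℝ}
    (hp : ∀ x, 0 ≤ p x ∧ p x ≤ b) (h0 : luxNorm p F ≠ 0) (htop : luxNorm p F ≠ ∞) :
    ∫⁻ x, (F x / luxNorm p F) ^ p x ≤ 2 ^ b := by
  have hlt : luxNorm p F < 2 * luxNorm p F := by
    rw [two_mul]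
    exact ENNReal.lt_add_right htop h0
  obtain ⟨c, ⟨-, hc⟩, hc2⟩ := sInf_lt_iff.1 hlt
  have hinv : (luxNorm p F)⁻¹ ≤ 2 * c⁻¹ := by
    calc (luxNorm p F)⁻¹ = 2 * (2 * luxNorm p F)⁻¹ := by
          rw [ENNReal.mul_inv (by simp) (by simp), ← mul_assoc,
            ENNReal.mul_inv_cancel (by simp) (by simp), one_mul]
      _ ≤ 2 * c⁻¹ := by gcongr
  calc ∫⁻ x, (F x / luxNorm p F) ^ p x ≤ ∫⁻ x, 2 ^ b * (F x / c) ^ p x := by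
        refine lintegral_mono fun x => ?_
        calc (F x / luxNorm p F) ^ p x ≤ (2 * (F x / c)) ^ p x := by
              refine ENNReal.rpow_le_rpow ?_ (hp x).1
              rw [div_eq_mul_inv, div_eq_mul_inv, mul_left_comm]
              gcongr
          _ = 2 ^ p x * (F x / c) ^ p x := ENNReal.mul_rpow_of_nonneg _ _ (hp x).1
          _ ≤ 2 ^ b * (F x / c) ^ p x := by
              gcongr
              exacts [one_le_two, (hp x).2]
    _ = 2 ^ b * ∫⁻ x, (F x / c) ^ p x :=
        lintegral_const_mul' _ _
          (ENNReal.rpow_ne_top_of_nonneg ((hp 0).1.trans (hp 0).2) (by simp))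
    _ ≤ 2 ^ b := mul_le_of_le_one_right' hc

/-- The modular `∫ ∑_v F_v(x) ^ p(x) dx` of `L^{p(·)}(ℓ_{p(·)})`, for real nonnegative `F_v`. -/
def mixedModular (p : En n → ℝ) (F : ℕ → En n → ℝ) : ℝ≥0∞ :=
  ∫⁻ x, ∑' v, ENNReal.ofReal (F v x ^ p x)

theorem tsum_rpow_rpow_div_rpow {f : ℕ → ℝ} {q d : ℝ} (hf : ∀ v, 0 ≤ f v) (hq : 0 < q)
    (hd : 0 < d) :
    ((∑' v, ENNReal.ofReal (f v) ^ q) ^ (1 / q) / ENNReal.ofReal d) ^ q =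
      ∑' v, ENNReal.ofReal ((f v / d) ^ q) := by
  rw [ENNReal.div_rpow_of_nonneg _ _ hq.le, one_div, ENNReal.rpow_inv_rpow hq.ne', div_eq_mul_inv,
    ← ENNReal.tsum_mul_right]
  refine tsum_congr fun v => ?_
  rw [← div_eq_mul_inv, ← ENNReal.div_rpow_of_nonneg _ _ hq.le, ← ENNReal.ofReal_div_of_pos hd,
    ENNReal.ofReal_rpow_of_nonneg (div_nonneg (hf v) hd.le) hq.le]

section mixedModular

variable {p : En n → ℝ} {F G : ℕ → En n → ℝ} {a b : ℝ}

theorem mixedNorm_le_of_mixedModular_le {K : ℝ≥0∞} (hF : ∀ v x, 0 ≤ F v x) (ha : 0 < a)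
    (hp : ∀ x, a ≤ p x) (hK : 1 ≤ K) (h : mixedModular p F ≤ K) :
    mixedNorm p p (fun v x => ENNReal.ofReal (F v x)) ≤ K ^ (1 / a) := by
  refine luxNorm_le_of_lintegral_rpow_le ha hp hK (le_of_eq_of_le ?_ h)
  refine lintegral_congr fun x => ?_
  simpa using tsum_rpow_rpow_div_rpow (hF · x) (ha.trans_le (hp x)) zero_lt_one

theorem mixedModular_div_mixedNorm_le (hF : ∀ v x, 0 ≤ F v x) (hp : ∀ x, 0 < p x ∧ p x ≤ b)
    (h0 : mixedNorm p p (fun v x => ENNReal.ofReal (F v x)) ≠ 0)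
    (htop : mixedNorm p p (fun v x => ENNReal.ofReal (F v x)) ≠ ∞) :
    mixedModular p
      (fun v x => F v x / (mixedNorm p p fun v x => ENNReal.ofReal (F v x)).toReal) ≤ 2 ^ b := by
  refine le_of_eq_of_le (lintegral_congr fun x => ?_)
    (lintegral_div_luxNorm_rpow_le (fun x => ⟨(hp x).1.le, (hp x).2⟩) h0 htop)
  rw [← tsum_rpow_rpow_div_rpow (hF · x) (hp x).1 (ENNReal.toReal_pos h0 htop),
    ENNReal.ofReal_toReal htop, mixedNorm]

theorem mixedModular_le_const_mul {K : ℝ} (hp : ∀ x, 0 ≤ p x ∧ p x ≤ b) (hK : 1 ≤ K)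
    (hF : ∀ v x, 0 ≤ F v x) (hG : ∀ v x, 0 ≤ G v x) (hFG : ∀ v x, F v x ≤ K * G v x) :
    mixedModular p F ≤ ENNReal.ofReal (K ^ b) * mixedModular p G := by
  rw [mixedModular, mixedModular, ← lintegral_const_mul' _ _ ENNReal.ofReal_ne_top]
  refine lintegral_mono fun x => ?_
  rw [← ENNReal.tsum_mul_left]
  refine ENNReal.tsum_le_tsum fun v => ?_
  rw [← ENNReal.ofReal_mul (by positivity)]
  refine ENNReal.ofReal_le_ofReal ?_
  calc F v x ^ p x ≤ (K * G v x) ^ p x := Real.rpow_le_rpow (hF v x) (hFG v x) (hp x).1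
    _ = K ^ p x * G v x ^ p x := Real.mul_rpow (by positivity) (hG v x)
    _ ≤ K ^ b * G v x ^ p x := by
        have := Real.rpow_nonneg (hG v x) (p x)
        gcongr
        exact (hp x).2

theorem mixedModular_max_le {T : En n → ℝ≥0∞} (hT : Measurable T)
    (hG : ∀ x, ∑' v, ENNReal.ofReal (G v x ^ p x) ≤ T x) :
    mixedModular p (fun v x => max (F v x) (G v x)) ≤ mixedModular p F + ∫⁻ x, T x := by
  rw [mixedModular, mixedModular, ← lintegral_add_right _ hT]
  refine lintegral_mono fun x => ?_
  calc ∑' v, ENNReal.ofReal (max (F v x) (G v x) ^ p x)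
      ≤ ∑' v, (ENNReal.ofReal (F v x ^ p x) + ENNReal.ofReal (G v x ^ p x)) := by
        refine ENNReal.tsum_le_tsum fun v => ?_
        rcases max_choice (F v x) (G v x) with h | h <;> rw [h]
        exacts [le_self_add, le_add_self]
    _ ≤ (∑' v, ENNReal.ofReal (F v x ^ p x)) + T x := by
        rw [ENNReal.tsum_add]
        gcongr
        exact hG x

theorem ofReal_rpow_mul_volume_le_mixedModular {S : Set (En n)} {c : ℝ} {v : ℕ}
    (hS : MeasurableSet S) (hp : ∀ x, a ≤ p x) (ha : 0 ≤ a) (hc : 1 ≤ c)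
    (hF : ∀ x ∈ S, c ≤ F v x) :
    ENNReal.ofReal (c ^ a) * volume S ≤ mixedModular p F := by
  rw [← lintegral_indicator_const hS]
  refine lintegral_mono (Set.indicator_le fun x hx => ?_)
  refine le_trans (ENNReal.ofReal_le_ofReal ?_) (ENNReal.le_tsum v)
  calc c ^ a ≤ c ^ p x := Real.rpow_le_rpow_of_exponent_le hc (hp x)
    _ ≤ F v x ^ p x := Real.rpow_le_rpow (by linarith) (hF x hx) (ha.trans (hp x))

end mixedModular

/-! ### The sequence spaces -/

/-- The weight `2^{v(α(x)+n/2)}` of the level `v` in the norm of `f^{α(·)}_{p(·),q(·)}`. -/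
def smoothnessWeight (α : En n → ℝ) (v : ℕ) (x : En n) : ℝ := 2 ^ ((v : ℝ) * (α x + n / 2))

theorem smoothnessWeight_pos (α : En n → ℝ) (v : ℕ) (x : En n) : 0 < smoothnessWeight α v x :=
  Real.rpow_pos_of_pos two_pos _

theorem smoothnessWeight_eq_mul (α : En n → ℝ) (v : ℕ) (x : En n) :
    smoothnessWeight α v x = ((2 : ℝ) ^ v) ^ α x * ((2 : ℝ) ^ v) ^ ((n : ℝ) / 2) := by
  rw [smoothnessWeight, Real.rpow_mul two_pos.le, Real.rpow_natCast,
    Real.rpow_add (by positivity)]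

/-- The functions `x ↦ 2^{v(α(x)+n/2)} ∑_m λ_{v,m} χ_{v,m}(x)`, whose mixed norm is the norm of `λ`
in `f^{α(·)}_{p(·),q(·)}`. -/
def weightedStep (α : En n → ℝ) (lam : ℕ → (Fin n → ℤ) → ℝ) (v : ℕ) (x : En n) : ℝ :=
  smoothnessWeight α v x * lam v (dyadicIndex v x)

theorem weightedStep_nonneg {α : En n → ℝ} {lam : ℕ → (Fin n → ℤ) → ℝ}
    (hlam : ∀ v m, 0 ≤ lam v m) (v : ℕ) (x : En n) : 0 ≤ weightedStep α lam v x :=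
  mul_nonneg (smoothnessWeight_pos α v x).le (hlam _ _)

theorem seqNorm_eq_mixedNorm (α p q : En n → ℝ) (lam : ℕ → (Fin n → ℤ) → ℂ) :
    seqNorm α p q lam =
      mixedNorm p q fun v x => ENNReal.ofReal (weightedStep α (fun v m => ‖lam v m‖) v x) := by
  simp only [seqNorm, tsum_mul_indicator_dyadicCube _ fun m => ENNReal.ofReal (_ * ‖lam _ m‖)]
  rfl

theorem seqNorm_ofReal_le {α p : En n → ℝ} {lam : ℕ → (Fin n → ℤ) → ℝ} {a : ℝ} {K : ℝ≥0∞}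
    (hlam : ∀ v m, 0 ≤ lam v m) (ha : 0 < a) (hp : ∀ x, a ≤ p x) (hK : 1 ≤ K)
    (h : mixedModular p (weightedStep α lam) ≤ K) :
    seqNorm α p p (fun v m => (lam v m : ℂ)) ≤ K ^ (1 / a) := by
  simp only [seqNorm_eq_mixedNorm, Complex.norm_of_nonneg (hlam _ _)]
  exact mixedNorm_le_of_mixedModular_le (weightedStep_nonneg hlam) ha hp hK h

theorem mixedModular_weightedStep_div_seqNorm_le {α p : En n → ℝ} {lam : ℕ → (Fin n → ℤ) → ℂ}
    {b : ℝ} (hp : ∀ x, 0 < p x ∧ p x ≤ b) (h0 : seqNorm α p p lam ≠ 0)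
    (htop : seqNorm α p p lam ≠ ∞) :
    mixedModular p (weightedStep α fun v m => ‖lam v m‖ / (seqNorm α p p lam).toReal) ≤
      2 ^ b := by
  rw [seqNorm_eq_mixedNorm] at h0 htop ⊢
  have h := mixedModular_div_mixedNorm_le
    (weightedStep_nonneg fun v m => norm_nonneg (lam v m)) hp h0 htop
  refine le_of_eq_of_le ?_ h
  congr 1
  funext v x
  exact (mul_div_assoc _ _ _).symm

theorem BddCubeOsc.exists_smoothnessWeight_le {α : En n → ℝ}
    (hα : BddCubeOsc (fun v _ => 2 ^ v) α) :
    ∃ K, 1 ≤ K ∧ ∀ (v : ℕ) m, ∀ x ∈ dyadicCube n v m,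
      smoothnessWeight α v x ≤ K * smoothnessWeight α v (dyadicCorner v m) ∧
        smoothnessWeight α v (dyadicCorner v m) ≤ K * smoothnessWeight α v x := by
  obtain ⟨K, hK, hle⟩ := hα.exists_rpow_le zero_le_one
  refine ⟨K, hK, fun v m x hx => ?_⟩
  have hlog : |Real.log (2 ^ v)| ≤ 1 * Real.log (2 ^ v) := by
    rw [one_mul, abs_of_nonneg (Real.log_nonneg (one_le_pow₀ one_le_two))]
  obtain ⟨hxy, hyx⟩ := hle v m x hx (2 ^ v) (by positivity) hlog
  simp only [smoothnessWeight_eq_mul, ← mul_assoc]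
  exact ⟨by gcongr, by gcongr⟩

/-! ### Regularized coefficients -/

theorem exists_smoothnessWeight_mul_le {α p : En n → ℝ} {a : ℝ} {M : ℝ≥0∞} (ha : 0 < a)
    (hp : ∀ x, a ≤ p x) (hα : BddCubeOsc (fun v _ => 2 ^ v) α) (hM : M ≠ ∞) :
    ∃ C, 1 ≤ C ∧ ∀ lam : ℕ → (Fin n → ℤ) → ℝ, (∀ v m, 0 ≤ lam v m) →
      mixedModular p (weightedStep α lam) ≤ M → ∀ v m,
        smoothnessWeight α v (dyadicCorner v m) * lam v m ≤ C * ((2 : ℝ) ^ v) ^ (n / a) := by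
  obtain ⟨K, hK, hweight⟩ := hα.exists_smoothnessWeight_le
  have hK0 : 0 < K := zero_lt_one.trans_le hK
  have hM1 : 1 ≤ 1 + M.toReal := le_add_of_nonneg_right ENNReal.toReal_nonneg
  refine ⟨K * (1 + M.toReal) ^ a⁻¹,
    one_le_mul_of_one_le_of_one_le hK (Real.one_le_rpow hM1 (by positivity)),
    fun lam hlam hmod v m => ?_⟩
  set c := smoothnessWeight α v (dyadicCorner v m) * lam v m / K with hc
  have hc0 : 0 ≤ c :=
    div_nonneg (mul_nonneg (smoothnessWeight_pos _ _ _).le (hlam v m)) hK0.le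
  have hca : c ^ a ≤ (1 + M.toReal) * ((2 : ℝ) ^ v) ^ n := by
    have h2 : 1 ≤ ((2 : ℝ) ^ v) ^ n := one_le_pow₀ (one_le_pow₀ one_le_two)
    rcases le_total c 1 with hc1 | hc1
    · exact (Real.rpow_le_one hc0 hc1 ha.le).trans (one_le_mul_of_one_le_of_one_le hM1 h2)
    have hcheb : ENNReal.ofReal (c ^ a) * volume (dyadicCube n v m) ≤ M := by
      refine (ofReal_rpow_mul_volume_le_mixedModular (v := v)
        (measurableSet_dyadicCube v m) hp ha.le hc1 fun x hx => ?_).trans hmod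
      rw [hc, div_le_iff₀' hK0, weightedStep, mem_dyadicCube_iff.1 hx, ← mul_assoc]
      exact mul_le_mul_of_nonneg_right (hweight v m x hx).2 (hlam v m)
    rw [volume_dyadicCube, ← ENNReal.ofReal_mul (by positivity), ENNReal.ofReal_le_iff_le_toReal hM,
      inv_pow, ← div_eq_mul_inv, div_le_iff₀ (by positivity)] at hcheb
    exact hcheb.trans (by gcongr; exact le_add_of_nonneg_left zero_le_one)
  calc smoothnessWeight α v (dyadicCorner v m) * lam v m = K * c := by rw [hc]; field_simp
    _ ≤ K * ((1 + M.toReal) * ((2 : ℝ) ^ v) ^ n) ^ a⁻¹ := by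
        gcongr
        exact (Real.le_rpow_inv_iff_of_pos hc0 (by positivity) ha).2 hca
    _ = K * (1 + M.toReal) ^ a⁻¹ * ((2 : ℝ) ^ v) ^ (n / a) := by
        rw [Real.mul_rpow (by positivity) (by positivity), ← Real.rpow_natCast, ← Real.rpow_mul
          (by positivity), div_eq_mul_inv, mul_assoc]

theorem cubeScale_rpow_neg_le (v : ℕ) (x : En n) :
    cubeScale v (dyadicIndex v x) ^ (-(n + 1 : ℝ)) ≤
      (1 / 2) ^ v * ((1 + n) ^ (n + 1 : ℝ) * (1 + ‖x‖) ^ (-(n + 1 : ℝ))) := by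
  have hdist := norm_sub_dyadicCorner_le_natCast (mem_dyadicCube_dyadicIndex v x)
  set y := dyadicCorner v (dyadicIndex v x) with hy
  have hn : (0 : ℝ) ≤ n := n.cast_nonneg
  have hxy : (1 + ‖x‖) / (1 + n) ≤ Real.exp 1 + ‖y‖ := by
    have : ‖x‖ ≤ ‖y‖ + ‖x - y‖ := by simpa using norm_add_le y (x - y)
    rw [div_le_iff₀ (by positivity)]
    nlinarith [Real.add_one_le_exp 1, norm_nonneg y, hn]
  have htwo : ((2 : ℝ) ^ v) ^ (-(n + 1 : ℝ)) ≤ (1 / 2) ^ v := by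
    calc ((2 : ℝ) ^ v) ^ (-(n + 1 : ℝ)) ≤ ((2 : ℝ) ^ v) ^ (-1 : ℝ) :=
          Real.rpow_le_rpow_of_exponent_le (one_le_pow₀ one_le_two) (by linarith)
      _ = (1 / 2) ^ v := by rw [Real.rpow_neg_one, one_div, inv_pow]
  rw [cubeScale, ← hy, Real.mul_rpow (by positivity) (by positivity)]
  gcongr
  calc (Real.exp 1 + ‖y‖) ^ (-(n + 1 : ℝ)) ≤ ((1 + ‖x‖) / (1 + n)) ^ (-(n + 1 : ℝ)) :=
        Real.rpow_le_rpow_of_nonpos (by positivity) hxy (by linarith)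
    _ = (1 + n) ^ (n + 1 : ℝ) * (1 + ‖x‖) ^ (-(n + 1 : ℝ)) := by
        rw [Real.div_rpow (by positivity) (by positivity), Real.rpow_neg (x := 1 + (n : ℝ))
          (by positivity), div_inv_eq_mul, mul_comm]

theorem exists_tsum_cubeScale_rpow_neg_le (n : ℕ) :
    ∃ T : En n → ℝ≥0∞, Measurable T ∧ ∫⁻ x, T x ≠ ∞ ∧
      ∀ x, ∑' v, ENNReal.ofReal (cubeScale v (dyadicIndex v x) ^ (-(n + 1 : ℝ))) ≤ T x := by
  refine ⟨fun x => 2 * (ENNReal.ofReal ((1 + n) ^ (n + 1 : ℝ)) *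
    ENNReal.ofReal ((1 + ‖x‖) ^ (-(n + 1 : ℝ)))), by fun_prop, ?_, fun x => ?_⟩
  · have hfin : ∫⁻ x : En n, ENNReal.ofReal ((1 + ‖x‖) ^ (-(n + 1 : ℝ))) ≠ ∞ :=
      (finite_integral_one_add_norm (by simp)).ne
    rw [lintegral_const_mul' _ _ (by simp), lintegral_const_mul' _ _ (by simp)]
    finiteness
  · have hgeom : ∑' v : ℕ, ENNReal.ofReal ((1 / 2) ^ v) = 2 := by
      rw [← ENNReal.ofReal_tsum_of_nonneg (fun v => by positivity) summable_geometric_two,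
        tsum_geometric_two, ENNReal.ofReal_ofNat]
    beta_reduce
    rw [← ENNReal.tsum_mul_right.trans (congrArg (· * _) hgeom)]
    refine ENNReal.tsum_le_tsum fun v => ?_
    rw [← ENNReal.ofReal_mul (by positivity), ← ENNReal.ofReal_mul (by positivity)]
    exact ENNReal.ofReal_le_ofReal (cubeScale_rpow_neg_le v x)

theorem abs_log_le_mul_log {s C W k : ℝ} (hC : 1 ≤ C) (hW : Real.exp 1 ≤ W)
    (hlo : W ^ (-k) ≤ s) (hhi : s ≤ C * W ^ k) :
    |Real.log s| ≤ (k + Real.log C) * Real.log W := by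
  have hW0 : 0 < W := (Real.exp_pos 1).trans_le hW
  have hC0 : 0 < C := zero_lt_one.trans_le hC
  have hlogW : 1 ≤ Real.log W := (Real.le_log_iff_exp_le hW0).2 hW
  have hlogC : 0 ≤ Real.log C := Real.log_nonneg hC
  have hs : 0 < s := (Real.rpow_pos_of_pos hW0 _).trans_le hlo
  have hlower := Real.log_le_log (Real.rpow_pos_of_pos hW0 _) hlo
  have hupper := Real.log_le_log hs hhi
  rw [Real.log_rpow hW0] at hlower
  rw [Real.log_mul hC0.ne' (Real.rpow_pos_of_pos hW0 _).ne', Real.log_rpow hW0] at hupper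
  rw [abs_le]
  constructor <;> nlinarith

theorem exists_mixedModular_corner_le {α p : En n → ℝ} {b : ℝ} (hp : ∀ x, 0 ≤ p x ∧ p x ≤ b)
    (hα : BddCubeOsc (fun v _ => 2 ^ v) α) :
    ∃ K : ℝ≥0∞, K ≠ ∞ ∧ ∀ lam : ℕ → (Fin n → ℤ) → ℝ, (∀ v m, 0 ≤ lam v m) →
      mixedModular p (fun v x => smoothnessWeight α v (dyadicCorner v (dyadicIndex v x)) *
        lam v (dyadicIndex v x)) ≤ K * mixedModular p (weightedStep α lam) := by
  obtain ⟨K, hK, hweight⟩ := hα.exists_smoothnessWeight_le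
  refine ⟨ENNReal.ofReal (K ^ b), ENNReal.ofReal_ne_top, fun lam hlam => ?_⟩
  refine mixedModular_le_const_mul hp hK
    (fun v x => mul_nonneg (smoothnessWeight_pos _ _ _).le (hlam _ _))
    (weightedStep_nonneg hlam) fun v x => ?_
  rw [weightedStep, ← mul_assoc]
  exact mul_le_mul_of_nonneg_right (hweight v _ x (mem_dyadicCube_dyadicIndex v x)).2 (hlam _ _)

/- The exponent of `ε = cubeScale ^ (-(n + 1) / a)` is chosen so that `ε ^ p(x)`, summed over the
cubes containing `x`, decays like the integrable function `(1 + ‖x‖) ^ (-(n + 1))`. -/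
theorem exists_regularization {α p : En n → ℝ} {a b : ℝ} {M : ℝ≥0∞} (ha : 0 < a)
    (hp : ∀ x, a ≤ p x ∧ p x ≤ b) (hα : BddCubeOsc (fun v _ => 2 ^ v) α) (hM : M ≠ ∞) :
    ∃ N, 0 ≤ N ∧ ∃ K, K ≠ ∞ ∧ ∀ lam : ℕ → (Fin n → ℤ) → ℝ, (∀ v m, 0 ≤ lam v m) →
      mixedModular p (weightedStep α lam) ≤ M →
      ∃ s : ℕ → (Fin n → ℤ) → ℝ,
        (∀ v m, 0 < s v m) ∧ (∀ v m, |Real.log (s v m)| ≤ N * Real.log (cubeScale v m)) ∧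
        (∀ v m, smoothnessWeight α v (dyadicCorner v m) * lam v m ≤ s v m) ∧
        mixedModular p (fun v x => s v (dyadicIndex v x)) ≤ K := by
  obtain ⟨C, hC, hcoeff⟩ := exists_smoothnessWeight_mul_le ha (fun x => (hp x).1) hα hM
  obtain ⟨K, hK, hcorner⟩ :=
    exists_mixedModular_corner_le (fun x => ⟨ha.le.trans (hp x).1, (hp x).2⟩) hα
  obtain ⟨T, hT, hTfin, hTle⟩ := exists_tsum_cubeScale_rpow_neg_le n
  set k : ℝ := (n + 1) / a with hk
  have hk0 : 0 ≤ k := by positivity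
  refine ⟨k + Real.log C, add_nonneg hk0 (Real.log_nonneg hC),
    K * M + ∫⁻ x, T x, by finiteness, fun lam hlam hmod => ?_⟩
  set t := fun v m => smoothnessWeight α v (dyadicCorner v m) * lam v m
  set ε : ℕ → (Fin n → ℤ) → ℝ := fun v m => cubeScale v m ^ (-k) with hε
  have hscale (v : ℕ) (m : Fin n → ℤ) : 0 < cubeScale v m :=
    zero_lt_one.trans_le (one_le_cubeScale v m)
  refine ⟨fun v m => max (t v m) (ε v m),
    fun v m => (Real.rpow_pos_of_pos (hscale v m) _).trans_le (le_max_right _ _),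
    fun v m => ?_, fun v m => le_max_left _ _, ?_⟩
  · refine abs_log_le_mul_log hC (exp_one_le_cubeScale v m) (le_max_right _ _) (max_le ?_ ?_)
    · refine (hcoeff lam hlam hmod v m).trans (mul_le_mul_of_nonneg_left ?_ (by linarith))
      calc ((2 : ℝ) ^ v) ^ (n / a) ≤ ((2 : ℝ) ^ v) ^ k :=
            Real.rpow_le_rpow_of_exponent_le (one_le_pow₀ one_le_two) (by rw [hk]; gcongr; simp)
        _ ≤ cubeScale v m ^ k := by gcongr; exact two_pow_le_cubeScale v m
    · calc ε v m ≤ 1 := Real.rpow_le_one_of_one_le_of_nonpos (one_le_cubeScale v m) (by linarith)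
        _ ≤ C * cubeScale v m ^ k :=
          one_le_mul_of_one_le_of_one_le hC (Real.one_le_rpow (one_le_cubeScale v m) hk0)
  · have hεT (x : En n) : ∑' v, ENNReal.ofReal (ε v (dyadicIndex v x) ^ p x) ≤ T x := by
      refine (ENNReal.tsum_le_tsum fun v => ENNReal.ofReal_le_ofReal ?_).trans (hTle x)
      rw [hε, ← Real.rpow_mul (hscale _ _).le]
      refine Real.rpow_le_rpow_of_exponent_le (one_le_cubeScale _ _) ?_
      rw [neg_mul, neg_le_neg_iff, hk, div_mul_eq_mul_div, le_div_iff₀ ha]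
      exact mul_le_mul_of_nonneg_left (hp x).1 (by positivity)
    refine (mixedModular_max_le (G := fun v x => ε v (dyadicIndex v x)) hT hεT).trans ?_
    gcongr
    exact (hcorner lam hlam).trans (by gcongr)

/-! ### The factors -/

/-- The factor of `s` in the endpoint space of smoothness `α₀` when `r = p / p₀`: on each cube, the
power `s ^ r` divided by the smoothness weight, both frozen at the corner of the cube. -/
def factorSeq (α₀ r : En n → ℝ) (s : ℕ → (Fin n → ℤ) → ℝ) (v : ℕ) (m : Fin n → ℤ) : ℝ :=
  s v m ^ r (dyadicCorner v m) / smoothnessWeight α₀ v (dyadicCorner v m)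

theorem factorSeq_pos {α₀ r : En n → ℝ} {s : ℕ → (Fin n → ℤ) → ℝ} (hs : ∀ v m, 0 < s v m)
    (v : ℕ) (m : Fin n → ℤ) : 0 < factorSeq α₀ r s v m :=
  div_pos (Real.rpow_pos_of_pos (hs v m) _) (smoothnessWeight_pos _ _ _)

theorem smoothnessWeight_rpow_mul_rpow {θ : ℝ} {α₀ α₁ α : En n → ℝ}
    (hα : ∀ x, α x = (1 - θ) * α₀ x + θ * α₁ x) (v : ℕ) (x : En n) :
    smoothnessWeight α₀ v x ^ (1 - θ) * smoothnessWeight α₁ v x ^ θ = smoothnessWeight α v x := by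
  simp only [smoothnessWeight]
  rw [← Real.rpow_mul two_pos.le, ← Real.rpow_mul two_pos.le, ← Real.rpow_add two_pos, hα]
  ring_nf

theorem factorSeq_rpow_mul_rpow {θ : ℝ} {α₀ α₁ α r₀ r₁ : En n → ℝ} {s : ℕ → (Fin n → ℤ) → ℝ}
    (hα : ∀ x, α x = (1 - θ) * α₀ x + θ * α₁ x) (hr : ∀ x, (1 - θ) * r₀ x + θ * r₁ x = 1)
    (hs : ∀ v m, 0 < s v m) (v : ℕ) (m : Fin n → ℤ) :
    factorSeq α₀ r₀ s v m ^ (1 - θ) * factorSeq α₁ r₁ s v m ^ θ =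
      s v m / smoothnessWeight α v (dyadicCorner v m) := by
  have hsv := hs v m
  set y := dyadicCorner v m
  have hpow : (s v m ^ r₀ y) ^ (1 - θ) * (s v m ^ r₁ y) ^ θ = s v m := by
    rw [← Real.rpow_mul hsv.le, ← Real.rpow_mul hsv.le, ← Real.rpow_add hsv,
      mul_comm (r₀ y), mul_comm (r₁ y), hr, Real.rpow_one]
  rw [factorSeq, factorSeq,
    Real.div_rpow (Real.rpow_nonneg hsv.le _) (smoothnessWeight_pos _ _ _).le,
    Real.div_rpow (Real.rpow_nonneg hsv.le _) (smoothnessWeight_pos _ _ _).le,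
    div_mul_div_comm, hpow, smoothnessWeight_rpow_mul_rpow hα]

theorem exists_weightedStep_factorSeq_le {α₀ r : En n → ℝ} {N : ℝ}
    (hα₀ : BddCubeOsc (fun v _ => 2 ^ v) α₀) (hr : BddCubeOsc cubeScale r) (hN : 0 ≤ N) :
    ∃ K, 1 ≤ K ∧ ∀ s : ℕ → (Fin n → ℤ) → ℝ, (∀ v m, 0 < s v m) →
      (∀ v m, |Real.log (s v m)| ≤ N * Real.log (cubeScale v m)) → ∀ v x,
        weightedStep α₀ (factorSeq α₀ r s) v x ≤ K * s v (dyadicIndex v x) ^ r x := by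
  obtain ⟨A, hA, hweight⟩ := hα₀.exists_smoothnessWeight_le
  obtain ⟨B, hB, hpow⟩ := hr.exists_rpow_le hN
  refine ⟨A * B, one_le_mul_of_one_le_of_one_le hA hB, fun s hs hlog v x => ?_⟩
  have hx := mem_dyadicCube_dyadicIndex v x
  set m := dyadicIndex v x
  have hW := smoothnessWeight_pos α₀ v (dyadicCorner v m)
  calc weightedStep α₀ (factorSeq α₀ r s) v x
      ≤ A * smoothnessWeight α₀ v (dyadicCorner v m) * factorSeq α₀ r s v m :=
        mul_le_mul_of_nonneg_right (hweight v m x hx).1 (factorSeq_pos hs v m).le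
    _ = A * s v m ^ r (dyadicCorner v m) := by
        rw [factorSeq]
        field_simp
    _ ≤ A * (B * s v m ^ r x) := by
        gcongr
        exact (hpow v m x hx _ (hs v m) (hlog v m)).2
    _ = A * B * s v m ^ r x := (mul_assoc _ _ _).symm

theorem exists_seqNorm_factorSeq_le {α₀ r p₀ p : En n → ℝ} {a b N : ℝ} {K : ℝ≥0∞} (ha : 0 < a)
    (hp₀ : ∀ x, a ≤ p₀ x ∧ p₀ x ≤ b) (hrp : ∀ x, r x * p₀ x = p x)
    (hα₀ : BddCubeOsc (fun v _ => 2 ^ v) α₀) (hr : BddCubeOsc cubeScale r) (hN : 0 ≤ N)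
    (hK : K ≠ ∞) :
    ∃ C, 0 < C ∧ ∀ s : ℕ → (Fin n → ℤ) → ℝ, (∀ v m, 0 < s v m) →
      (∀ v m, |Real.log (s v m)| ≤ N * Real.log (cubeScale v m)) →
      mixedModular p (fun v x => s v (dyadicIndex v x)) ≤ K →
      seqNorm α₀ p₀ p₀ (fun v m => (factorSeq α₀ r s v m : ℂ)) ≤ ENNReal.ofReal C := by
  obtain ⟨A, hA, hstep⟩ := exists_weightedStep_factorSeq_le hα₀ hr hN
  set L := max 1 (ENNReal.ofReal (A ^ b) * K)
  have hL1 : 1 ≤ L := le_max_left _ _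
  have hLfin : L ^ (1 / a) ≠ ∞ :=
    ENNReal.rpow_ne_top_of_nonneg (by positivity)
      (max_ne_top ENNReal.one_ne_top (ENNReal.mul_ne_top ENNReal.ofReal_ne_top hK))
  refine ⟨(L ^ (1 / a)).toReal, ENNReal.toReal_pos
    (zero_lt_one.trans_le (ENNReal.one_le_rpow hL1 (by positivity))).ne' hLfin,
    fun s hs hlog hmod => ?_⟩
  rw [ENNReal.ofReal_toReal hLfin]
  have hfac := fun v m => (factorSeq_pos (α₀ := α₀) (r := r) hs v m).le
  have hmod_rpow : mixedModular p₀ (fun v x => s v (dyadicIndex v x) ^ r x) =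
      mixedModular p fun v x => s v (dyadicIndex v x) := by
    simp only [mixedModular, ← Real.rpow_mul (hs _ _).le, hrp]
  refine seqNorm_ofReal_le hfac ha (fun x => (hp₀ x).1) hL1 ?_
  calc mixedModular p₀ (weightedStep α₀ (factorSeq α₀ r s))
      ≤ ENNReal.ofReal (A ^ b) * mixedModular p₀ (fun v x => s v (dyadicIndex v x) ^ r x) :=
        mixedModular_le_const_mul (fun x => ⟨ha.le.trans (hp₀ x).1, (hp₀ x).2⟩)
          hA (weightedStep_nonneg hfac) (fun v x => Real.rpow_nonneg (hs _ _).le _)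
          (hstep s hs hlog)
    _ ≤ ENNReal.ofReal (A ^ b) * K := by
        rw [hmod_rpow]
        gcongr
    _ ≤ L := le_max_right _ _

/-! ### Interpolated exponents -/

section InterpolatedExponent

variable {u w a b : ℝ}

theorem mem_Icc_of_one_div_eq {p₀ p₁ p : ℝ} (hu : 0 ≤ u) (hw : 0 ≤ w) (huw : u + w = 1)
    (ha : 0 < a) (hp₀ : p₀ ∈ Set.Icc a b) (hp₁ : p₁ ∈ Set.Icc a b)
    (hp : 1 / p = u / p₀ + w / p₁) : p ∈ Set.Icc a b := by
  have hinv {q : ℝ} (hq : q ∈ Set.Icc a b) : q⁻¹ ∈ Set.Icc b⁻¹ a⁻¹ :=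
    ⟨inv_anti₀ (ha.trans_le hq.1) hq.2, inv_anti₀ ha hq.1⟩
  have hb : 0 < b := ha.trans_le (hp₀.1.trans hp₀.2)
  have hconv : p⁻¹ ∈ Set.Icc b⁻¹ a⁻¹ := by
    have := convex_Icc b⁻¹ a⁻¹ (hinv hp₀) (hinv hp₁) hu hw huw
    rwa [smul_eq_mul, smul_eq_mul, ← div_eq_mul_inv, ← div_eq_mul_inv, ← hp, one_div] at this
  have hp0 : 0 < p := inv_pos.1 ((inv_pos.2 hb).trans_le hconv.1)
  exact ⟨(inv_le_inv₀ hp0 ha).1 hconv.2, (inv_le_inv₀ hb hp0).1 hconv.1⟩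

theorem BddCubeOsc.div_of_one_div_eq {W : ℕ → (Fin n → ℤ) → ℝ} {p₀ p₁ p : En n → ℝ}
    (hW : ∀ v m, 1 ≤ W v m) (hu : 0 ≤ u) (hw : 0 ≤ w) (huw : u + w = 1) (ha : 0 < a)
    (hp₀ : ∀ x, p₀ x ∈ Set.Icc a b) (hp₁ : ∀ x, p₁ x ∈ Set.Icc a b)
    (hp : ∀ x, 1 / p x = u / p₀ x + w / p₁ x) (hosc₀ : BddCubeOsc W p₀)
    (hosc₁ : BddCubeOsc W p₁) : BddCubeOsc W fun x => p x / p₀ x := by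
  have hmean (x : En n) : a ≤ u * p₁ x + w * p₀ x :=
    (convex_Icc a b (hp₁ x) (hp₀ x) hu hw huw).1
  have heq (x : En n) : p x / p₀ x = p₁ x / (u * p₁ x + w * p₀ x) := by
    have h₀ := ha.trans_le (hp₀ x).1
    have h₁ := ha.trans_le (hp₁ x).1
    have h := ha.trans_le (mem_Icc_of_one_div_eq hu hw huw ha (hp₀ x) (hp₁ x) (hp x)).1
    have hpx := hp x
    rw [div_eq_div_iff h₀.ne' (ha.trans_le (hmean x)).ne']
    field_simp at hpx
    linarith
  rw [funext heq]
  refine hosc₁.div hW (hosc₁.const_mul_add_const_mul hW hosc₀ u w) ha (b := b) (fun x => ?_) hmean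
  rw [abs_of_pos (ha.trans_le (hp₁ x).1)]
  exact (hp₁ x).2

end InterpolatedExponent

theorem GlobLogHolder.exists_common_bounds {c₀ c₁ : ℝ} {p₀ p₁ : En n → ℝ}
    (hp₀ : GlobLogHolder c₀ p₀) (hp₁ : GlobLogHolder c₁ p₁) (h₀ : ∃ a > 0, ∀ x, a ≤ p₀ x)
    (h₁ : ∃ a > 0, ∀ x, a ≤ p₁ x) :
    ∃ a > 0, ∃ b, (∀ x, p₀ x ∈ Set.Icc a b) ∧ ∀ x, p₁ x ∈ Set.Icc a b := by
  obtain ⟨a₀, ha₀, hle₀⟩ := h₀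
  obtain ⟨a₁, ha₁, hle₁⟩ := h₁
  obtain ⟨b₀, hb₀⟩ := hp₀.exists_forall_le
  obtain ⟨b₁, hb₁⟩ := hp₁.exists_forall_le
  exact ⟨min a₀ a₁, lt_min ha₀ ha₁, max b₀ b₁,
    fun x => ⟨min_le_of_left_le (hle₀ x), le_max_of_le_left (hb₀ x)⟩,
    fun x => ⟨min_le_of_right_le (hle₁ x), le_max_of_le_right (hb₁ x)⟩⟩

/-! ### The factorization -/

theorem exists_factorization {θ a b : ℝ} {p₀ p₁ α₀ α₁ p α : En n → ℝ} (hθ : θ ∈ Set.Icc 0 1)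
    (ha : 0 < a) (hp₀ : ∀ x, p₀ x ∈ Set.Icc a b) (hp₁ : ∀ x, p₁ x ∈ Set.Icc a b)
    (hosc₀ : BddCubeOsc cubeScale p₀) (hosc₁ : BddCubeOsc cubeScale p₁)
    (hα₀ : BddCubeOsc (fun v _ => 2 ^ v) α₀) (hα₁ : BddCubeOsc (fun v _ => 2 ^ v) α₁)
    (hp : ∀ x, 1 / p x = (1 - θ) / p₀ x + θ / p₁ x)
    (hα : ∀ x, α x = (1 - θ) * α₀ x + θ * α₁ x) {M : ℝ≥0∞} (hM : M ≠ ∞) :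
    ∃ C : ℝ, 0 < C ∧ ∀ lam : ℕ → (Fin n → ℤ) → ℝ, (∀ v m, 0 ≤ lam v m) →
      mixedModular p (weightedStep α lam) ≤ M →
      ∃ lam0 lam1 : ℕ → (Fin n → ℤ) → ℝ, (∀ v m, 0 < lam0 v m) ∧ (∀ v m, 0 < lam1 v m) ∧
        (∀ v m, lam v m ≤ lam0 v m ^ (1 - θ) * lam1 v m ^ θ) ∧
        seqNorm α₀ p₀ p₀ (fun v m => (lam0 v m : ℂ)) ≤ ENNReal.ofReal C ∧
        seqNorm α₁ p₁ p₁ (fun v m => (lam1 v m : ℂ)) ≤ ENNReal.ofReal C := by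
  have hθ' : 0 ≤ 1 - θ := sub_nonneg.2 hθ.2
  have hpab (x : En n) : p x ∈ Set.Icc a b :=
    mem_Icc_of_one_div_eq hθ' hθ.1 (by ring) ha (hp₀ x) (hp₁ x) (hp x)
  have hne {q : En n → ℝ} (hq : ∀ x, q x ∈ Set.Icc a b) (x : En n) : q x ≠ 0 :=
    (ha.trans_le (hq x).1).ne'
  have hr₀ : BddCubeOsc cubeScale fun x => p x / p₀ x :=
    .div_of_one_div_eq one_le_cubeScale hθ' hθ.1 (by ring) ha hp₀ hp₁ hp hosc₀ hosc₁
  have hr₁ : BddCubeOsc cubeScale fun x => p x / p₁ x :=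
    .div_of_one_div_eq one_le_cubeScale hθ.1 hθ' (by ring) ha hp₁ hp₀
      (fun x => (hp x).trans (add_comm _ _)) hosc₁ hosc₀
  have hr (x : En n) : (1 - θ) * (p x / p₀ x) + θ * (p x / p₁ x) = 1 := by
    rw [mul_div_left_comm, mul_div_left_comm θ, ← mul_add, ← hp, mul_one_div_cancel (hne hpab x)]
  have hα_osc : BddCubeOsc (fun v _ => 2 ^ v) α := by
    rw [funext hα]
    exact hα₀.const_mul_add_const_mul (fun v _ => one_le_pow₀ one_le_two) hα₁ _ _
  obtain ⟨N, hN, K, hK, hreg⟩ := exists_regularization ha hpab hα_osc hM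
  obtain ⟨C₀, hC₀, hle₀⟩ := exists_seqNorm_factorSeq_le ha hp₀
    (fun x => div_mul_cancel₀ (p x) (hne hp₀ x)) hα₀ hr₀ hN hK
  obtain ⟨C₁, -, hle₁⟩ := exists_seqNorm_factorSeq_le ha hp₁
    (fun x => div_mul_cancel₀ (p x) (hne hp₁ x)) hα₁ hr₁ hN hK
  refine ⟨max C₀ C₁, lt_max_of_lt_left hC₀, fun lam hlam hmod => ?_⟩
  obtain ⟨s, hs, hlog, hle, hsK⟩ := hreg lam hlam hmod
  refine ⟨_, _, factorSeq_pos hs, factorSeq_pos hs, fun v m => ?_,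
    (hle₀ s hs hlog hsK).trans (ENNReal.ofReal_le_ofReal (le_max_left _ _)),
    (hle₁ s hs hlog hsK).trans (ENNReal.ofReal_le_ofReal (le_max_right _ _))⟩
  rw [factorSeq_rpow_mul_rpow hα hr hs, le_div_iff₀' (smoothnessWeight_pos _ _ _)]
  exact hle v m

theorem stmt10_general (θ : ℝ) (hθ : θ ∈ Set.Icc (0 : ℝ) 1) (p₀ p₁ α₀ α₁ p α : En n → ℝ)
    (hp₀ : ∃ c, GlobLogHolder c p₀) (hp₁ : ∃ c, GlobLogHolder c p₁)
    (hp₀a : ∃ a > 0, ∀ x, a ≤ p₀ x) (hp₁a : ∃ a > 0, ∀ x, a ≤ p₁ x)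
    (hα₀ : ∃ c, LocLogHolder c α₀) (hα₁ : ∃ c, LocLogHolder c α₁)
    (hp : ∀ x, 1 / p x = (1 - θ) / p₀ x + θ / p₁ x)
    (hα : ∀ x, α x = (1 - θ) * α₀ x + θ * α₁ x) :
    ∃ C : ℝ, 0 < C ∧ ∀ lam : ℕ → (Fin n → ℤ) → ℂ,
      seqNorm α p p lam ≠ 0 → seqNorm α p p lam ≠ ∞ →
      ∃ lam0 lam1 : ℕ → (Fin n → ℤ) → ℝ,
        (∀ (j : ℕ) (m : Fin n → ℤ), 0 ≤ lam0 j m) ∧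
        (∀ (j : ℕ) (m : Fin n → ℤ), 0 ≤ lam1 j m) ∧
        (∀ (j : ℕ) (m : Fin n → ℤ),
          ENNReal.ofReal ‖lam j m‖ ≤
            seqNorm α p p lam *
              (ENNReal.ofReal (lam0 j m) ^ (1 - θ) * ENNReal.ofReal (lam1 j m) ^ θ)) ∧
        seqNorm α₀ p₀ p₀ (fun j m => (lam0 j m : ℂ)) ≤ ENNReal.ofReal C ∧
        seqNorm α₁ p₁ p₁ (fun j m => (lam1 j m : ℂ)) ≤ ENNReal.ofReal C := by
  obtain ⟨c₀, hp₀⟩ := hp₀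
  obtain ⟨c₁, hp₁⟩ := hp₁
  obtain ⟨d₀, hα₀⟩ := hα₀
  obtain ⟨d₁, hα₁⟩ := hα₁
  obtain ⟨a, ha, b, hp₀ab, hp₁ab⟩ := hp₀.exists_common_bounds hp₁ hp₀a hp₁a
  have hpab (x : En n) : 0 < p x ∧ p x ≤ b :=
    have h := mem_Icc_of_one_div_eq (sub_nonneg.2 hθ.2) hθ.1 (by ring) ha (hp₀ab x) (hp₁ab x) (hp x)
    ⟨ha.trans_le h.1, h.2⟩
  obtain ⟨C, hC, hfactor⟩ := exists_factorization hθ ha hp₀ab hp₁ab hp₀.bddCubeOsc hp₁.bddCubeOsc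
    hα₀.bddCubeOsc hα₁.bddCubeOsc hp hα (M := 2 ^ b) (by simp)
  refine ⟨C, hC, fun lam h0 htop => ?_⟩
  obtain ⟨lam0, lam1, hlam0, hlam1, hle, hnorm0, hnorm1⟩ := hfactor
    (fun v m => ‖lam v m‖ / (seqNorm α p p lam).toReal)
    (fun v m => div_nonneg (norm_nonneg _) ENNReal.toReal_nonneg)
    (mixedModular_weightedStep_div_seqNorm_le hpab h0 htop)
  refine ⟨lam0, lam1, fun v m => (hlam0 v m).le, fun v m => (hlam1 v m).le, fun v m => ?_,
    hnorm0, hnorm1⟩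
  rw [ENNReal.ofReal_rpow_of_pos (hlam0 v m), ENNReal.ofReal_rpow_of_pos (hlam1 v m),
    ← ENNReal.ofReal_mul (Real.rpow_nonneg (hlam0 v m).le _), ← ENNReal.ofReal_toReal htop,
    ← ENNReal.ofReal_mul ENNReal.toReal_nonneg]
  exact ENNReal.ofReal_le_ofReal ((div_le_iff₀' (ENNReal.toReal_pos h0 htop)).1 (hle v m))

end Factorization

/-- Step 2 of Theorem `calderon-prod1`: factorization of an arbitrary
element of `f^{α(·)}_{p(·),p(·)}` through the two endpoint sequence spaces. -/
theorem stmt10 {n : ℕ} (θ : ℝ) (hθ : θ ∈ Set.Ioo (0 : ℝ) 1)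
    (p₀ p₁ α₀ α₁ p α : En n → ℝ)
    (hp₀ : ∃ c, GlobLogHolder c p₀) (hp₁ : ∃ c, GlobLogHolder c p₁)
    (hp₀b : ∃ b : ℝ, ∀ x, 1 ≤ p₀ x ∧ p₀ x ≤ b)
    (hp₁b : ∃ b : ℝ, ∀ x, 1 ≤ p₁ x ∧ p₁ x ≤ b)
    (hα₀ : ∃ c, LocLogHolder c α₀) (hα₁ : ∃ c, LocLogHolder c α₁)
    (hp : ∀ x, 1 / p x = (1 - θ) / p₀ x + θ / p₁ x)
    (hα : ∀ x, α x = (1 - θ) * α₀ x + θ * α₁ x) :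
    ∃ C : ℝ, 0 < C ∧ ∀ lam : ℕ → (Fin n → ℤ) → ℂ,
      seqNorm α p p lam ≠ 0 → seqNorm α p p lam ≠ ∞ →
      ∃ lam0 lam1 : ℕ → (Fin n → ℤ) → ℝ,
        (∀ (j : ℕ) (m : Fin n → ℤ), 0 ≤ lam0 j m) ∧
        (∀ (j : ℕ) (m : Fin n → ℤ), 0 ≤ lam1 j m) ∧
        (∀ (j : ℕ) (m : Fin n → ℤ),
          ENNReal.ofReal ‖lam j m‖ ≤
            seqNorm α p p lam *
              (ENNReal.ofReal (lam0 j m) ^ (1 - θ) * ENNReal.ofReal (lam1 j m) ^ θ)) ∧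
        seqNorm α₀ p₀ p₀ (fun j m => (lam0 j m : ℂ)) ≤ ENNReal.ofReal C ∧
        seqNorm α₁ p₁ p₁ (fun j m => (lam1 j m : ℂ)) ≤ ENNReal.ofReal C := by
  exact stmt10_general θ (Set.Ioo_subset_Icc_self hθ) p₀ p₁ α₀ α₁ p α hp₀ hp₁
    (hp₀b.elim fun _ h => ⟨1, one_pos, fun x => (h x).1⟩)
    (hp₁b.elim fun _ h => ⟨1, one_pos, fun x => (h x).1⟩) hα₀ hα₁ hp hα
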